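/- arXiv:2301.05365 — 2 statements merged into one kernel-verified Lean document; each statement's English description precedes it below -/
import Mathlib

section
/- (Bayes/invariance step in the proof of the weighted MC randomization test.) Assume the proportionality hypothesis H₀^∝. Then the law of the tuple is invariant under drawing an index according to the weights and swapping it to the front: for every function φ : 𝒟^(m+1) → [0,∞], Σ_{(d₀,…,d_m) ∈ 𝒟^(m+1)} h(d₀,…,d_m) · Σ_{i=0}^m w_i(d₀,…,d_m) · φ(σ_i(d₀,…,d_m)) = Σ_{(d₀,…,d_m) ∈ 𝒟^(m+1)} h(d₀,…,d_m) · φ(d₀,…,d_m). Equivalently, if 𝔇 ~ h and, given 𝔇, an index I ∈ {0,…,m} is drawn with conditional probability w_i(𝔇), then σ_I(𝔇) has the same distribution as 𝔇. -/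
open scoped NNReal ENNReal Classical BigOperators

noncomputable section

/-- The joint law of the tuple `(D̃⁽⁰⁾, …, D̃⁽ᵐ⁾)`:
`h(d₀, …, d_m) = f(d₀) · ∏_{k=1}^m q(d_k | d₀)`. Here `q e d` denotes `q(e | d)`. -/
def jointLaw {D : Type*} (f : D → ℝ≥0) (q : D → D → ℝ≥0) (m : ℕ)
    (d : Fin (m + 1) → D) : ℝ≥0 :=
  f (d 0) * ∏ k ∈ Finset.univ.erase (0 : Fin (m + 1)), q (d k) (d 0)

/-- `σ_i` : the involution of `𝒟^(m+1)` swapping coordinates `0` and `i`. -/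
def swapTuple {D : Type*} (m : ℕ) (i : Fin (m + 1)) (d : Fin (m + 1) → D) :
    Fin (m + 1) → D :=
  d ∘ Equiv.swap 0 i

/-- Numerator of the weight `w_i`: `f̂(d_i) · ∏_{k ≠ i} q(d_k | d_i)`. -/
def wNum {D : Type*} (q : D → D → ℝ≥0) (fhat : D → ℝ≥0) (m : ℕ)
    (i : Fin (m + 1)) (d : Fin (m + 1) → D) : ℝ≥0 :=
  fhat (d i) * ∏ k ∈ Finset.univ.erase i, q (d k) (d i)

/-- The weight `w_i(d₀, …, d_m)`; in `ℝ≥0`, division by zero yields `0`,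
matching the convention that `w_i = 0` when the denominator vanishes. -/
def weight {D : Type*} (q : D → D → ℝ≥0) (fhat : D → ℝ≥0) (m : ℕ)
    (i : Fin (m + 1)) (d : Fin (m + 1) → D) : ℝ≥0 :=
  wNum q fhat m i d / ∑ j, wNum q fhat m j d

/-- The proportionality hypothesis `H₀^∝`. -/
def PropHyp {D : Type*} (f : D → ℝ≥0) (q : D → D → ℝ≥0) (fhat : D → ℝ≥0)
    (m : ℕ) : Prop :=
  ∀ d : Fin (m + 1) → D,
    (∃ i, 0 < jointLaw f q m (swapTuple m i d)) →
      ∃ K : ℝ≥0, 0 < K ∧ ∀ i, fhat (d i) = K * f (d i)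

/-!
Every `σ_i` is a bijection of the space of tuples, so it suffices that the mass arriving at each
tuple `d`, namely `Σ_i h(σ_i d) w_i(σ_i d)`, is `h(d)`. Relabelling coordinates gives
`w_i(σ_i d) = w_0(d)`, so this mass is `w_0(d) Σ_i h(σ_i d)`. If the sum is positive, `H₀^∝` applies
and its constant `K` cancels in the weights, so that `w_0(d)` is the posterior probability
`h(d) / Σ_i h(σ_i d)`; if the sum is zero, so is its term `h(d)`.
-/

theorem tsum_mul_sum_mul_comp_equiv {ι X Y : Type*} [Fintype ι] (e : ι → X ≃ Y)
    {μ : X → ℝ≥0∞} {w : ι → X → ℝ≥0∞} {ν : Y → ℝ≥0∞}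
    (hν : ∀ y, ∑ i, μ ((e i).symm y) * w i ((e i).symm y) = ν y) (φ : Y → ℝ≥0∞) :
    ∑' x, μ x * ∑ i, w i x * φ (e i x) = ∑' y, ν y * φ y :=
  calc ∑' x, μ x * ∑ i, w i x * φ (e i x)
    _ = ∑ i, ∑' x, μ x * w i x * φ (e i x) := by
      simp only [Finset.mul_sum, mul_assoc]
      exact Summable.tsum_finsetSum fun _ _ => ENNReal.summable
    _ = ∑ i, ∑' y, μ ((e i).symm y) * w i ((e i).symm y) * φ y := by
      refine Finset.sum_congr rfl fun i _ => ?_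
      simp only [← (e i).symm.tsum_eq fun x => μ x * w i x * φ (e i x), Equiv.apply_symm_apply]
    _ = ∑' y, ν y * φ y := by
      rw [← Summable.tsum_finsetSum fun _ _ => ENNReal.summable]
      simp only [← Finset.sum_mul, hν]

section

variable {D : Type*} {f fhat : D → ℝ≥0} {q : D → D → ℝ≥0} {m : ℕ}

theorem swapTuple_involutive (i : Fin (m + 1)) :
    Function.Involutive (swapTuple (D := D) m i) := fun d => by
  funext k
  simp [swapTuple]

theorem wNum_comp_perm (i : Fin (m + 1)) (s : Equiv.Perm (Fin (m + 1))) (d : Fin (m + 1) → D) :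
    wNum q f m i (d ∘ s) = wNum q f m (s i) d :=
  congrArg (f (d (s i)) * ·) (Finset.prod_equiv s (by simp) fun _ _ => rfl)

theorem weight_comp_perm (i : Fin (m + 1)) (s : Equiv.Perm (Fin (m + 1))) (d : Fin (m + 1) → D) :
    weight q f m i (d ∘ s) = weight q f m (s i) d := by
  simp only [weight, wNum_comp_perm, Equiv.sum_comp s fun j => wNum q f m j d]

theorem jointLaw_eq_wNum_zero (d : Fin (m + 1) → D) : jointLaw f q m d = wNum q f m 0 d :=
  rfl

theorem jointLaw_swapTuple (i : Fin (m + 1)) (d : Fin (m + 1) → D) :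
    jointLaw f q m (swapTuple m i d) = wNum q f m i d := by
  rw [jointLaw_eq_wNum_zero, swapTuple, wNum_comp_perm, Equiv.swap_apply_left]

theorem weight_swapTuple_self (i : Fin (m + 1)) (d : Fin (m + 1) → D) :
    weight q f m i (swapTuple m i d) = weight q f m 0 d := by
  rw [swapTuple, weight_comp_perm, Equiv.swap_apply_right]

theorem sum_wNum_mul_weight_self (i : Fin (m + 1)) (d : Fin (m + 1) → D) :
    (∑ j, wNum q f m j d) * weight q f m i d = wNum q f m i d :=
  mul_div_cancel_of_imp' fun hsum => Finset.sum_eq_zero_iff.mp hsum i (Finset.mem_univ i)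

theorem weight_eq_of_proportional {K : ℝ≥0} (hK : K ≠ 0) {d : Fin (m + 1) → D}
    (hd : ∀ i, fhat (d i) = K * f (d i)) (i : Fin (m + 1)) :
    weight q fhat m i d = weight q f m i d := by
  have hnum (j : Fin (m + 1)) : wNum q fhat m j d = K * wNum q f m j d := by
    rw [wNum, hd, mul_assoc, wNum]
  simp only [weight, hnum, ← Finset.mul_sum, mul_div_mul_left _ _ hK]

theorem PropHyp.sum_wNum_mul_weight (hprop : PropHyp f q fhat m) (i : Fin (m + 1))
    (d : Fin (m + 1) → D) :
    (∑ j, wNum q f m j d) * weight q fhat m i d = wNum q f m i d := by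
  by_cases hpos : ∃ j, 0 < jointLaw f q m (swapTuple m j d)
  · obtain ⟨K, hK, hd⟩ := hprop d hpos
    rw [weight_eq_of_proportional hK.ne' hd, sum_wNum_mul_weight_self]
  · have hzero : ∀ j, wNum q f m j d = 0 := by
      simpa only [jointLaw_swapTuple, not_exists, not_lt, nonpos_iff_eq_zero] using hpos
    simp only [hzero, Finset.sum_const_zero, zero_mul]

theorem PropHyp.sum_jointLaw_mul_weight_swapTuple (hprop : PropHyp f q fhat m)
    (d : Fin (m + 1) → D) :
    ∑ i, jointLaw f q m (swapTuple m i d) * weight q fhat m i (swapTuple m i d) =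
      jointLaw f q m d := by
  simp only [jointLaw_swapTuple, weight_swapTuple_self, ← Finset.sum_mul,
    hprop.sum_wNum_mul_weight]
  exact (jointLaw_eq_wNum_zero d).symm

theorem weighted_swap_invariance_general (hprop : PropHyp f q fhat m)
    (φ : (Fin (m + 1) → D) → ℝ≥0∞) :
    ∑' d : Fin (m + 1) → D, (jointLaw f q m d : ℝ≥0∞) *
        ∑ i, (weight q fhat m i d : ℝ≥0∞) * φ (swapTuple m i d) =
      ∑' d : Fin (m + 1) → D, (jointLaw f q m d : ℝ≥0∞) * φ d :=
  tsum_mul_sum_mul_comp_equiv (fun i => (swapTuple_involutive i).toPerm)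
    (fun d => mod_cast hprop.sum_jointLaw_mul_weight_swapTuple d) φ

end

/-- **(Bayes/invariance step.)** Under `H₀^∝`, the law of the tuple is invariant
under drawing an index `I` according to the weights and swapping it to the front:
for every `φ : 𝒟^(m+1) → [0,∞]`,
`Σ_d h(d) · Σ_i w_i(d) · φ(σ_i d) = Σ_d h(d) · φ(d)`. -/
theorem weighted_swap_invariance
    {D : Type*} [Countable D]
    (f : D → ℝ≥0) (q : D → D → ℝ≥0) (fhat : D → ℝ≥0)
    (m : ℕ) (hm : 1 ≤ m)
    (hf : ∑' d, f d = 1)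
    (hq : ∀ d, ∑' e, q e d = 1)
    (hprop : PropHyp f q fhat m)
    (φ : (Fin (m + 1) → D) → ℝ≥0∞) :
    ∑' d : Fin (m + 1) → D, (jointLaw f q m d : ℝ≥0∞) *
        ∑ i, (weight q fhat m i d : ℝ≥0∞) * φ (swapTuple m i d) =
      ∑' d : Fin (m + 1) → D, (jointLaw f q m d : ℝ≥0∞) * φ d :=
  weighted_swap_invariance_general hprop φ
end
end

section
/- (Proposition 1, Environment 3: stationary non-reactive environment, arbitrary permutations.) Suppose the law of the data has the stationary factorization f(d) = ∏_{t=1}^T pC(c_t) · a_t(x_t; c_t, h_{t−1}(d)) · r(y_t; c_t, x_t), where pC : 𝒞 → ℝ≥0 is the (time-invariant) context law and r : 𝒴 × 𝒞 × 𝒳 → ℝ≥0 is the (time-invariant) response law. Assume the null hypothesis H₀^{⊥⊥,g}: for all y ∈ 𝒴, c ∈ 𝒞, and all x, x' ∈ 𝒳 with g(x) = g(x'), r(y; c, x) = r(y; c, x'). Fix a trajectory d. Then for every permutation π of {1, …, T} and every trajectory d̃ with (c̃_t, g(x̃_t), ỹ_t) = (c_{π(t)}, g(x_{π(t)}), y_{π(t)})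 for all t ∈ {1, …, T}, one has f(d̃) = K(d) · f̂(d̃), where K(d) = ∏_{t=1}^T pC(c_t) · r(y_t; c_t, x_t) depends only on d (not on π or d̃). -/
open scoped NNReal BigOperators

noncomputable section

variable {C X Y G : Type*}

/-- Embedding of an index `s < t` into `Fin T`. -/
def emb {T : ℕ} (t : Fin T) (s : Fin (t : ℕ)) : Fin T :=
  ⟨(s : ℕ), lt_trans s.isLt t.isLt⟩

/-- The history `h_{t−1}(d)`: the prefix of the trajectory strictly before time `t`. -/
def hist {T : ℕ} (d : Fin T → C × X × Y) (t : Fin T) : Fin (t : ℕ) → C × X × Y :=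
  fun s => d (emb t s)

/-- The unnormalized assignment likelihood
`f̂(d) = ∏_{t=1}^T a_t(x_t; c_t, h_{t−1}(d))`. -/
def assignLik {T : ℕ} (a : (t : Fin T) → X → C → (Fin (t : ℕ) → C × X × Y) → ℝ≥0)
    (d : Fin T → C × X × Y) : ℝ≥0 :=
  ∏ t, a t (d t).2.1 (d t).1 (hist d t)

/-- The data law in a stationary non-reactive environment:
`f(d) = ∏_t pC(c_t) · a_t(x_t; c_t, h_{t−1}(d)) · r(y_t; c_t, x_t)`. -/
def statTrajLaw {T : ℕ}
    (pC : C → ℝ≥0)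
    (a : (t : Fin T) → X → C → (Fin (t : ℕ) → C × X × Y) → ℝ≥0)
    (r : Y → C → X → ℝ≥0)
    (d : Fin T → C × X × Y) : ℝ≥0 :=
  ∏ t, pC (d t).1 * a t (d t).2.1 (d t).1 (hist d t) *
    r (d t).2.2 (d t).1 (d t).2.1

/-- The environment's share `∏ i, pC(c_i) · r(y_i; c_i, x_i)` of the data law, i.e. the constant
`K(d)`. No history enters it, so the records may be indexed by any finite type. -/
def envLik {ι : Type*} [Fintype ι] (pC : C → ℝ≥0) (r : Y → C → X → ℝ≥0) (d : ι → C × X × Y) :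
    ℝ≥0 :=
  ∏ i, pC (d i).1 * r (d i).2.2 (d i).1 (d i).2.1

section EnvLik

variable {ι κ : Type*} [Fintype ι] [Fintype κ] (pC : C → ℝ≥0) (r : Y → C → X → ℝ≥0)

theorem envLik_comp_equiv (e : ι ≃ κ) (d : κ → C × X × Y) :
    envLik pC r (d ∘ e) = envLik pC r d :=
  e.prod_comp fun k => pC (d k).1 * r (d k).2.2 (d k).1 (d k).2.1

variable {r}

theorem envLik_congr_of_null {g : X → G}
    (hnull : ∀ (y : Y) (c : C) (x x' : X), g x = g x' → r y c x = r y c x')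
    {d d' : ι → C × X × Y}
    (h : ∀ i, (d i).1 = (d' i).1 ∧ g (d i).2.1 = g (d' i).2.1 ∧ (d i).2.2 = (d' i).2.2) :
    envLik pC r d = envLik pC r d' := by
  refine Finset.prod_congr rfl fun i _ => ?_
  obtain ⟨context_eq, action_eq, response_eq⟩ := h i
  rw [hnull _ _ _ _ action_eq, context_eq, response_eq]

end EnvLik

section Trajectory

variable {T : ℕ} (pC : C → ℝ≥0) (a : (t : Fin T) → X → C → (Fin (t : ℕ) → C × X × Y) → ℝ≥0)

theorem statTrajLaw_eq_envLik_mul_assignLik (r : Y → C → X → ℝ≥0) (d : Fin T → C × X × Y) :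
    statTrajLaw pC a r d = envLik pC r d * assignLik a d := by
  rw [statTrajLaw, envLik, assignLik, ← Finset.prod_mul_distrib]
  exact Finset.prod_congr rfl fun t _ => mul_right_comm _ _ _

theorem prop1_stationary_nonreactive_permutation_general {r : Y → C → X → ℝ≥0} {g : X → G}
    (hnull : ∀ (y : Y) (c : C) (x x' : X), g x = g x' → r y c x = r y c x')
    (d : Fin T → C × X × Y) (π : Equiv.Perm (Fin T)) (dtil : Fin T → C × X × Y)
    (h : ∀ t, (dtil t).1 = (d (π t)).1 ∧ g (dtil t).2.1 = g (d (π t)).2.1 ∧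
      (dtil t).2.2 = (d (π t)).2.2) :
    statTrajLaw pC a r dtil = envLik pC r d * assignLik a dtil :=
  calc statTrajLaw pC a r dtil
    _ = envLik pC r dtil * assignLik a dtil := statTrajLaw_eq_envLik_mul_assignLik pC a r dtil
    _ = envLik pC r (d ∘ π) * assignLik a dtil := by
      rw [envLik_congr_of_null pC hnull (d' := d ∘ π) h]
    _ = envLik pC r d * assignLik a dtil := by rw [envLik_comp_equiv]

end Trajectory

/-- **(Proposition 1, Environment 3: stationary non-reactive environment,
arbitrary permutations.)** Under the null `H₀^{⊥⊥,g}`, for any permutation `π`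
of the timesteps and any resample `d̃` agreeing with the `π`-permuted data in
contexts, responses, and `g`-evaluations of actions, one has
`f(d̃) = K(d) · f̂(d̃)` with `K(d)` depending only on `d`. -/
theorem prop1_stationary_nonreactive_permutation
    [Countable C] [Countable X] [Countable Y]
    (T : ℕ) (hT : 1 ≤ T)
    (pC : C → ℝ≥0)
    (a : (t : Fin T) → X → C → (Fin (t : ℕ) → C × X × Y) → ℝ≥0)
    (r : Y → C → X → ℝ≥0)
    (g : X → G)
    (hnull : ∀ (y : Y) (c : C) (x x' : X), g x = g x' → r y c x = r y c x')
    (d : Fin T → C × X × Y) :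
    ∀ (π : Equiv.Perm (Fin T)) (dtil : Fin T → C × X × Y),
      (∀ t, (dtil t).1 = (d (π t)).1 ∧ g (dtil t).2.1 = g (d (π t)).2.1 ∧
        (dtil t).2.2 = (d (π t)).2.2) →
      statTrajLaw pC a r dtil =
        (∏ t, pC (d t).1 * r (d t).2.2 (d t).1 (d t).2.1) *
          assignLik a dtil :=
  prop1_stationary_nonreactive_permutation_general pC a hnull d
end
end
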